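/- arXiv:2111.03044 — 2 statements merged into one kernel-verified Lean document; each statement's English description precedes it below -/
import Mathlib

section
/- Let (Q', 𝒜) be a measurable space with a probability measure μ, let 𝒫 be a ground set, and let f : 𝒫 × Q' → [0,∞) satisfy 0 ≤ f(p,q) ≤ M for every p ∈ 𝒫 and q ∈ Q' (with each map q ↦ f(p,q) measurable), where M > 0. Let P ⊆ 𝒫 be a finite set with weights w : P → [0,∞) satisfying Σ_{p∈P} w(p) = 1, and let C ⊆ 𝒫 be a finite set with weights u : C → [0,∞) satisfying |Σ_{p∈P} w(p) − Σ_{c∈C} u(c)| ≤ ε, where ε > 0. Let δ ∈ (0,1), and let q₁,…,q_k be independent Q'-valued random variables with common distribution μ, where k ≥ 2·((1+ε)·M)²·ln(2/δ)/ε². Then with probability at least 1−2δ the following implication holds: if |(1/k)·Σ_{i=1}^{k} f(P,w,q_i) − (1/k)·Σ_{i=1}^{k} f(C,u,q_i)| ≤ ε, then |E_μ[f(P,w,q)] − E_μ[f(C,u,q)]| ≤ 3ε. -/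
open MeasureTheory ProbabilityTheory

lemma one_sided_aux
    {Q' : Type*} [MeasurableSpace Q'] (μ : Measure Q') [IsProbabilityMeasure μ]
    {Ω : Type*} [MeasurableSpace Ω] (Pr : Measure Ω) [IsProbabilityMeasure Pr]
    (g : Q' → ℝ) (hg : Measurable g) (a b B ε δ : ℝ) (hB : 0 < B) (hab : b - a = B)
    (hgb : ∀ q, g q ∈ Set.Icc a b) (hε : 0 < ε) (hδ : δ ∈ Set.Ioo (0 : ℝ) 1)
    (k : ℕ) (hk : (k : ℝ) ≥ 2 * B ^ 2 * Real.log (2 / δ) / ε ^ 2)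
    (X : Fin k → Ω → Q')
    (hX_meas : ∀ i, Measurable (X i))
    (hX_indep : iIndepFun (m := fun _ => ‹MeasurableSpace Q'›) X Pr)
    (hX_dist : ∀ i, Measure.map (X i) Pr = μ) :
    Pr.real {ω | k * ε ≤ ∑ i : Fin k, (g (X i ω) - ∫ q, g q ∂μ)} ≤ δ / 2 := by
  obtain ⟨hδ0, hδ1⟩ := hδ
  have hlog : 0 < Real.log (2 / δ) := Real.log_pos (by rw [lt_div_iff₀ hδ0]; linarith)
  have hkpos : (0 : ℝ) < k := lt_of_lt_of_le (by positivity) hk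
  have hint : ∀ i, ∫ ω, g (X i ω) ∂Pr = ∫ q, g q ∂μ := by
    intro i
    rw [← hX_dist i, integral_map (hX_meas i).aemeasurable hg.aestronglyMeasurable]
  have hsub : ∀ i ∈ (Finset.univ : Finset (Fin k)),
      HasSubgaussianMGF (fun ω => g (X i ω) - ∫ q, g q ∂μ) ((‖b - a‖₊ / 2) ^ 2) Pr := by
    intro i _
    have := hasSubgaussianMGF_of_mem_Icc (μ := Pr) (X := fun ω => g (X i ω)) (a := a) (b := b)
      (hg.comp (hX_meas i)).aemeasurable (Filter.Eventually.of_forall fun ω => hgb _)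
    rwa [hint i] at this
  have hind : iIndepFun (fun i ω => g (X i ω) - ∫ q, g q ∂μ) Pr :=
    hX_indep.comp (fun _ q => g q - ∫ q, g q ∂μ) (fun _ => hg.sub_const _)
  have h := HasSubgaussianMGF.measure_sum_ge_le_of_iIndepFun hind hsub
    (ε := k * ε) (by positivity)
  refine h.trans ?_
  have hexp : Real.exp (-Real.log (2 / δ)) = δ / 2 := by
    rw [Real.exp_neg, Real.exp_log (by positivity), inv_div]
  rw [← hexp]
  apply Real.exp_le_exp.mpr
  rw [hab]
  simp only [Finset.sum_const, Finset.card_univ, Fintype.card_fin, nsmul_eq_mul]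
  push_cast
  rw [Real.norm_of_nonneg hB.le, neg_div, neg_le_neg_iff, le_div_iff₀ (by positivity)]
  rw [ge_iff_le, div_le_iff₀ (by positivity)] at hk
  nlinarith [mul_le_mul_of_nonneg_left hk hkpos.le, mul_pos hkpos (mul_pos hlog (pow_pos hB 2))]

lemma two_sided_aux
    {Q' : Type*} [MeasurableSpace Q'] (μ : Measure Q') [IsProbabilityMeasure μ]
    {Ω : Type*} [MeasurableSpace Ω] (Pr : Measure Ω) [IsProbabilityMeasure Pr]
    (g : Q' → ℝ) (hg : Measurable g) (B ε δ : ℝ) (hB : 0 < B)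
    (hgb : ∀ q, g q ∈ Set.Icc 0 B) (hε : 0 < ε) (hδ : δ ∈ Set.Ioo (0 : ℝ) 1)
    (k : ℕ) (hk : (k : ℝ) ≥ 2 * B ^ 2 * Real.log (2 / δ) / ε ^ 2)
    (X : Fin k → Ω → Q')
    (hX_meas : ∀ i, Measurable (X i))
    (hX_indep : iIndepFun (m := fun _ => ‹MeasurableSpace Q'›) X Pr)
    (hX_dist : ∀ i, Measure.map (X i) Pr = μ) :
    Pr.real {ω | ε ≤ |(1 / (k : ℝ)) * ∑ i : Fin k, g (X i ω) - ∫ q, g q ∂μ|} ≤ δ := by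
  have hlog : 0 < Real.log (2 / δ) :=
    Real.log_pos (by rw [lt_div_iff₀ hδ.1]; linarith [hδ.2])
  have hkpos : (0 : ℝ) < k := lt_of_lt_of_le (by positivity) hk
  have h1 := one_sided_aux μ Pr g hg 0 B B ε δ hB (by ring) hgb hε hδ k hk X hX_meas
    hX_indep hX_dist
  have h2 := one_sided_aux μ Pr (fun q => - g q) hg.neg (-B) 0 B ε δ hB (by ring)
    (fun q => ⟨neg_le_neg (hgb q).2, neg_nonpos.mpr (hgb q).1⟩) hε hδ k hk X hX_meas
    hX_indep hX_dist
  have hle := measureReal_union_le (μ := Pr)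
    {ω | k * ε ≤ ∑ i : Fin k, (g (X i ω) - ∫ q, g q ∂μ)}
    {ω | k * ε ≤ ∑ i : Fin k, (- g (X i ω) - ∫ q, - g q ∂μ)}
  refine (measureReal_mono ?_ (measure_ne_top _ _)).trans
    (hle.trans (by linarith))
  intro ω hω
  simp only [Set.mem_setOf_eq, Set.mem_union, Finset.sum_sub_distrib, integral_neg,
    Finset.sum_neg_distrib, Finset.sum_const, Finset.card_univ, Fintype.card_fin,
    nsmul_eq_mul] at hω ⊢
  have e : ∑ i : Fin k, g (X i ω) = k * ((1 / (k : ℝ)) * ∑ i : Fin k, g (X i ω)) := by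
    field_simp
  rw [e]
  rcases le_abs.mp hω with h | h
  · left; nlinarith
  · right; nlinarith

/-- **Claim 2 (main theorem).** If the loss `f` is bounded by `M` on the ground set, the
input weights sum to `1`, the coreset weight sum is within `ε` of the input weight sum,
and `k ≥ 2((1+ε)M)²ln(2/δ)/ε²` queries are sampled i.i.d. from `μ`, then with probability
at least `1 - 2δ`: whenever the empirical average losses of `(P,w)` and `(C,u)` over the
sample are within `ε` of each other, the expected losses are within `3ε` of each other,
i.e. `(C,u)` is a `(3ε,μ)`-coreset. -/
theorem autoCL_generalization
    {Q' : Type*} [MeasurableSpace Q'] (μ : Measure Q') [IsProbabilityMeasure μ]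
    {α : Type*} (f : α → Q' → ℝ) (M : ℝ) (hM : 0 < M)
    (hf_nonneg : ∀ (p : α) (q : Q'), 0 ≤ f p q)
    (hf_bound : ∀ (p : α) (q : Q'), f p q ≤ M)
    (hf_meas : ∀ p : α, Measurable (f p))
    (P : Finset α) (w : α → ℝ) (hw : ∀ p ∈ P, 0 ≤ w p)
    (hwsum : ∑ p ∈ P, w p = 1)
    (C : Finset α) (u : α → ℝ) (hu : ∀ c ∈ C, 0 ≤ u c)
    (ε : ℝ) (hε : 0 < ε)
    (husum : |∑ p ∈ P, w p - ∑ c ∈ C, u c| ≤ ε)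
    (δ : ℝ) (hδ : δ ∈ Set.Ioo (0 : ℝ) 1)
    {Ω : Type*} [MeasurableSpace Ω] (Pr : Measure Ω) [IsProbabilityMeasure Pr]
    (k : ℕ) (hk : (k : ℝ) ≥ 2 * ((1 + ε) * M) ^ 2 * Real.log (2 / δ) / ε ^ 2)
    (X : Fin k → Ω → Q')
    (hX_meas : ∀ i, Measurable (X i))
    (hX_indep : iIndepFun (m := fun _ => ‹MeasurableSpace Q'›) X Pr)
    (hX_dist : ∀ i, Measure.map (X i) Pr = μ) :
    Pr {ω : Ω |
        |(1 / (k : ℝ)) * ∑ i : Fin k, ∑ p ∈ P, w p * f p (X i ω)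
            - (1 / (k : ℝ)) * ∑ i : Fin k, ∑ c ∈ C, u c * f c (X i ω)| ≤ ε →
          |(∫ q, (∑ p ∈ P, w p * f p q) ∂μ) - ∫ q, (∑ c ∈ C, u c * f c q) ∂μ| ≤ 3 * ε}
      ≥ ENNReal.ofReal (1 - 2 * δ) := by
  have husum' : ∑ c ∈ C, u c ≤ 1 + ε := by
    have := (abs_le.mp husum).1
    linarith
  have hB : 0 < (1 + ε) * M := by positivity
  have key : ∀ (S : Finset α) (v : α → ℝ), (∀ s ∈ S, 0 ≤ v s) → ∑ s ∈ S, v s ≤ 1 + ε →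
      ∀ q, ∑ s ∈ S, v s * f s q ∈ Set.Icc 0 ((1 + ε) * M) := by
    intro S v hv hs q
    refine ⟨Finset.sum_nonneg fun s hs => mul_nonneg (hv s hs) (hf_nonneg s q), ?_⟩
    calc ∑ s ∈ S, v s * f s q ≤ ∑ s ∈ S, v s * M :=
          Finset.sum_le_sum fun s hs => mul_le_mul_of_nonneg_left (hf_bound s q) (hv s hs)
      _ = (∑ s ∈ S, v s) * M := by rw [Finset.sum_mul]
      _ ≤ (1 + ε) * M := mul_le_mul_of_nonneg_right hs hM.le
  have hmeas : ∀ (S : Finset α) (v : α → ℝ), Measurable fun q => ∑ s ∈ S, v s * f s q :=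
    fun S v => Finset.measurable_fun_sum S fun s _ => (hf_meas s).const_mul _
  have h1 := two_sided_aux μ Pr _ (hmeas P w) _ ε δ hB (key P w hw (by linarith)) hε hδ k hk X
    hX_meas hX_indep hX_dist
  have h2 := two_sided_aux μ Pr _ (hmeas C u) _ ε δ hB (key C u hu husum') hε hδ k hk X
    hX_meas hX_indep hX_dist
  rw [ge_iff_le, ENNReal.ofReal_le_iff_le_toReal (measure_ne_top _ _)]
  set A := {ω | ε ≤ |(1 / (k : ℝ)) * ∑ i : Fin k, ∑ p ∈ P, w p * f p (X i ω)
    - ∫ q, ∑ p ∈ P, w p * f p q ∂μ|} with hA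
  set D := {ω | ε ≤ |(1 / (k : ℝ)) * ∑ i : Fin k, ∑ c ∈ C, u c * f c (X i ω)
    - ∫ q, ∑ c ∈ C, u c * f c q ∂μ|} with hD
  change _ ≤ Pr.real _
  set G := {ω : Ω | _ → _} with hG
  have hcov : (Set.univ : Set Ω) ⊆ G ∪ (A ∪ D) := by
    intro ω _
    by_cases ha : ω ∈ A
    · exact Or.inr (Or.inl ha)
    by_cases hd : ω ∈ D
    · exact Or.inr (Or.inr hd)
    left
    simp only [hA, hD, Set.mem_setOf_eq, not_le] at ha hd
    rw [hG, Set.mem_setOf_eq]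
    intro h
    rw [abs_lt] at ha hd
    rw [abs_le] at h ⊢
    constructor <;> linarith [ha.1, ha.2, hd.1, hd.2, h.1, h.2]
  have h3 := measureReal_mono (μ := Pr) hcov (measure_ne_top _ _)
  rw [probReal_univ] at h3
  have h4 := measureReal_union_le (μ := Pr) G (A ∪ D)
  have h5 := measureReal_union_le (μ := Pr) A D
  linarith
end

section
/- Let (Q', 𝒜) be a measurable space with a probability measure μ, let 𝒫 be a ground set, and let f : 𝒫 × Q' → [0,∞) satisfy 0 ≤ f(p,q) ≤ M for every p ∈ 𝒫 and q ∈ Q' (with each map q ↦ f(p,q) measurable), where M > 0. Let P ⊆ 𝒫 be finite with w : P → [0,∞), Σ_{p∈P} w(p) = 1, and let C ⊆ 𝒫 be finite with u : C → [0,∞). Let ε' > 0 and set ε := ε'·M; assume |Σ_{p∈P} w(p) − Σ_{c∈C} u(c)| ≤ ε. Let δ ∈ (0,1), and let q₁,…,q_k be independent Q'-valued random variables with common distribution μ, where k ≥ 2·((1+ε)·M)²·ln(2/δ)/ε². Then with probability at least 1−2δ the following implication holds: if f(P,w,q_i) ≠ 0 for every i and (1/k)·Σ_{i=1}^{k} |1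 − f(C,u,q_i)/f(P,w,q_i)| ≤ ε', then |E_μ[f(P,w,q)] − E_μ[f(C,u,q)]| ≤ 3ε = 3ε'·M. -/
open MeasureTheory ProbabilityTheory

lemma hoeffding_one_sided {Q' : Type*} [MeasurableSpace Q'] (μ : Measure Q')
    [IsProbabilityMeasure μ] {Ω : Type*} [MeasurableSpace Ω] (Pr : Measure Ω)
    [IsProbabilityMeasure Pr] (k : ℕ) (X : Fin k → Ω → Q')
    (hX_meas : ∀ i, Measurable (X i)) (hX_indep : iIndepFun X Pr)
    (hX_dist : ∀ i, Measure.map (X i) Pr = μ)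
    (g : Q' → ℝ) (hg : Measurable g) (B ε δ : ℝ) (hB : 0 < B) (hε : 0 < ε) (hδ : 0 < δ)
    (hgB : ∀ q, g q ∈ Set.Icc (-B) B) (hk0 : 0 < k)
    (hk : (k : ℝ) ≥ 2 * B ^ 2 * Real.log (2 / δ) / ε ^ 2) :
    Pr.real {ω | k * ε ≤ ∑ i, (g (X i ω) - ∫ q, g q ∂μ)} ≤ δ / 2 := by
  have hk0' : (0 : ℝ) < k := by exact_mod_cast hk0
  have hint : ∀ i, ∫ ω, g (X i ω) ∂Pr = ∫ q, g q ∂μ := by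
    intro i
    rw [← hX_dist i, integral_map (hX_meas i).aemeasurable hg.aestronglyMeasurable]
  have hsub : ∀ i ∈ (Finset.univ : Finset (Fin k)),
      HasSubgaussianMGF (fun ω => g (X i ω) - ∫ q, g q ∂μ) ((‖B - (-B)‖₊ / 2) ^ 2) Pr := by
    intro i _
    rw [← hint i]
    exact hasSubgaussianMGF_of_mem_Icc (X := fun ω => g (X i ω))
      (hg.comp (hX_meas i)).aemeasurable (Filter.Eventually.of_forall fun ω => hgB _)
  have hind : iIndepFun (fun i ω => g (X i ω) - ∫ q, g q ∂μ) Pr :=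
    hX_indep.comp (fun _ q => g q - ∫ q, g q ∂μ) (fun _ => hg.sub_const _)
  refine (HasSubgaussianMGF.measure_sum_ge_le_of_iIndepFun hind hsub
    (by positivity : (0:ℝ) ≤ k * ε)).trans ?_
  have hc : ((∑ i : Fin k, (‖B - (-B)‖₊ / 2) ^ 2 : NNReal) : ℝ) = k * B ^ 2 := by
    push_cast
    rw [Finset.sum_const, Finset.card_univ, Fintype.card_fin, nsmul_eq_mul,
      Real.norm_of_nonneg (by linarith)]
    ring
  rw [hc]
  have h1 : -(k * ε) ^ 2 / (2 * (k * B ^ 2)) = -(k * ε ^ 2 / (2 * B ^ 2)) := by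
    field_simp
  have h2 : Real.log (2 / δ) ≤ k * ε ^ 2 / (2 * B ^ 2) := by
    rw [ge_iff_le, div_le_iff₀ (by positivity)] at hk
    rw [le_div_iff₀ (by positivity)]
    linarith
  rw [h1]
  calc Real.exp (-(k * ε ^ 2 / (2 * B ^ 2))) ≤ Real.exp (-Real.log (2 / δ)) :=
        Real.exp_le_exp.2 (by linarith)
    _ = δ / 2 := by
        rw [Real.exp_neg, Real.exp_log (by positivity), inv_div]

/-- **Generalization for the practical algorithm (Eq. (5) combined with Claim 2).**
If `0 ≤ f ≤ M` on the ground set, the input weights sum to `1`, `ε := ε'·M`, the coreset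
weight sum is within `ε` of the input weight sum, and `k ≥ 2((1+ε)M)²ln(2/δ)/ε²` queries
are sampled i.i.d. from `μ`, then with probability at least `1 - 2δ`: whenever the
empirical losses of `(P,w)` are nonzero on the sample and the average relative
approximation error of `(C,u)` over the sample is at most `ε'`, the expected losses of
`(P,w)` and `(C,u)` differ by at most `3ε = 3ε'·M`. -/
theorem practical_autoCL_generalization
    {Q' : Type*} [MeasurableSpace Q'] (μ : Measure Q') [IsProbabilityMeasure μ]
    {α : Type*} (f : α → Q' → ℝ) (M : ℝ) (hM : 0 < M)
    (hf_nonneg : ∀ (p : α) (q : Q'), 0 ≤ f p q)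
    (hf_bound : ∀ (p : α) (q : Q'), f p q ≤ M)
    (hf_meas : ∀ p : α, Measurable (f p))
    (P : Finset α) (w : α → ℝ) (hw : ∀ p ∈ P, 0 ≤ w p)
    (hwsum : ∑ p ∈ P, w p = 1)
    (C : Finset α) (u : α → ℝ) (hu : ∀ c ∈ C, 0 ≤ u c)
    (ε' ε : ℝ) (hε' : 0 < ε') (hε : ε = ε' * M)
    (husum : |∑ p ∈ P, w p - ∑ c ∈ C, u c| ≤ ε)
    (δ : ℝ) (hδ : δ ∈ Set.Ioo (0 : ℝ) 1)
    {Ω : Type*} [MeasurableSpace Ω] (Pr : Measure Ω) [IsProbabilityMeasure Pr]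
    (k : ℕ) (hk : (k : ℝ) ≥ 2 * ((1 + ε) * M) ^ 2 * Real.log (2 / δ) / ε ^ 2)
    (X : Fin k → Ω → Q')
    (hX_meas : ∀ i, Measurable (X i))
    (hX_indep : iIndepFun X Pr)
    (hX_dist : ∀ i, Measure.map (X i) Pr = μ) :
    Pr {ω : Ω |
        ((∀ i : Fin k, (∑ p ∈ P, w p * f p (X i ω)) ≠ 0) ∧
          (1 / (k : ℝ)) * ∑ i : Fin k,
            |1 - (∑ c ∈ C, u c * f c (X i ω)) / (∑ p ∈ P, w p * f p (X i ω))| ≤ ε') →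
          |(∫ q, (∑ p ∈ P, w p * f p q) ∂μ) - ∫ q, (∑ c ∈ C, u c * f c q) ∂μ|
            ≤ 3 * ε' * M}
      ≥ ENNReal.ofReal (1 - 2 * δ) := by
  obtain ⟨hδ0, hδ1⟩ := hδ
  have hε0 : 0 < ε := by rw [hε]; positivity
  set F : Q' → ℝ := fun q => ∑ p ∈ P, w p * f p q with hF
  set G : Q' → ℝ := fun q => ∑ c ∈ C, u c * f c q with hG
  have hF0 : ∀ q, 0 ≤ F q := fun q =>
    Finset.sum_nonneg fun p hp => mul_nonneg (hw p hp) (hf_nonneg p q)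
  have hG0 : ∀ q, 0 ≤ G q := fun q =>
    Finset.sum_nonneg fun p hp => mul_nonneg (hu p hp) (hf_nonneg p q)
  have hFM : ∀ q, F q ≤ M := fun q => by
    calc F q ≤ ∑ p ∈ P, w p * M :=
          Finset.sum_le_sum fun p hp => mul_le_mul_of_nonneg_left (hf_bound p q) (hw p hp)
      _ = M := by rw [← Finset.sum_mul, hwsum, one_mul]
  have husum' : ∑ c ∈ C, u c ≤ 1 + ε := by
    rw [hwsum] at husum
    linarith [(abs_le.1 husum).1]
  have hGM : ∀ q, G q ≤ (1 + ε) * M := fun q => by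
    calc G q ≤ ∑ p ∈ C, u p * M :=
          Finset.sum_le_sum fun p hp => mul_le_mul_of_nonneg_left (hf_bound p q) (hu p hp)
      _ ≤ (1 + ε) * M := by
          rw [← Finset.sum_mul]; exact mul_le_mul_of_nonneg_right husum' hM.le
  have hFm : Measurable F := Finset.measurable_fun_sum _ fun p _ => (hf_meas p).const_mul _
  have hGm : Measurable G := Finset.measurable_fun_sum _ fun p _ => (hf_meas p).const_mul _
  have hB : 0 < (1 + ε) * M := by positivity
  have hMB : M ≤ (1 + ε) * M := by nlinarith
  have hFi : Integrable F μ := Integrable.of_mem_Icc 0 M hFm.aemeasurable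
    (Filter.Eventually.of_forall fun q => ⟨hF0 q, hFM q⟩)
  have hGi : Integrable G μ := Integrable.of_mem_Icc 0 ((1 + ε) * M) hGm.aemeasurable
    (Filter.Eventually.of_forall fun q => ⟨hG0 q, hGM q⟩)
  have hlog : 0 < Real.log (2 / δ) := Real.log_pos (by rw [lt_div_iff₀ hδ0]; linarith)
  have hk0' : (0 : ℝ) < k := lt_of_lt_of_le (by positivity) hk
  have hk0 : 0 < k := by exact_mod_cast hk0'
  have hA := hoeffding_one_sided μ Pr k X hX_meas hX_indep hX_dist (fun q => F q - G q)
    (hFm.sub hGm) ((1 + ε) * M) ε δ hB hε0 hδ0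
    (fun q => ⟨by linarith [hF0 q, hGM q], by linarith [hG0 q, hFM q]⟩) hk0 hk
  have hA' := hoeffding_one_sided μ Pr k X hX_meas hX_indep hX_dist (fun q => G q - F q)
    (hGm.sub hFm) ((1 + ε) * M) ε δ hB hε0 hδ0
    (fun q => ⟨by linarith [hG0 q, hFM q], by linarith [hF0 q, hGM q]⟩) hk0 hk
  rw [integral_sub hFi hGi] at hA
  rw [integral_sub hGi hFi] at hA'
  set A := {ω | (k : ℝ) * ε ≤ ∑ i, (F (X i ω) - G (X i ω) - (∫ q, F q ∂μ - ∫ q, G q ∂μ))}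
  set A' := {ω | (k : ℝ) * ε ≤ ∑ i, (G (X i ω) - F (X i ω) - (∫ q, G q ∂μ - ∫ q, F q ∂μ))}
  set S := {ω : Ω | ((∀ i : Fin k, F (X i ω) ≠ 0) ∧ (1 / (k : ℝ)) * ∑ i : Fin k,
            |1 - G (X i ω) / F (X i ω)| ≤ ε') →
          |(∫ q, F q ∂μ) - ∫ q, G q ∂μ| ≤ 3 * ε' * M} with hS
  change Pr S ≥ _
  have hcov : Set.univ ⊆ S ∪ (A ∪ A') := by
    intro ω _
    by_contra hn
    simp only [Set.mem_union, not_or] at hn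
    obtain ⟨hn1, hn2, hn3⟩ := hn
    apply hn1
    rintro ⟨hne, hrel⟩
    have e2 : ∑ i, (F (X i ω) - G (X i ω) - (∫ q, F q ∂μ - ∫ q, G q ∂μ)) < k * ε :=
      not_le.1 hn2
    have e3 : ∑ i, (G (X i ω) - F (X i ω) - (∫ q, G q ∂μ - ∫ q, F q ∂μ)) < k * ε :=
      not_le.1 hn3
    have hsum : ∑ i, |F (X i ω) - G (X i ω)| ≤ k * ε := by
      calc ∑ i, |F (X i ω) - G (X i ω)|
          ≤ ∑ i, M * |1 - G (X i ω) / F (X i ω)| := by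
            refine Finset.sum_le_sum fun i _ => ?_
            have : F (X i ω) - G (X i ω) = F (X i ω) * (1 - G (X i ω) / F (X i ω)) := by
              have := hne i
              field_simp
            rw [this, abs_mul, abs_of_nonneg (hF0 _)]
            exact mul_le_mul_of_nonneg_right (hFM _) (abs_nonneg _)
        _ = M * ∑ i, |1 - G (X i ω) / F (X i ω)| := by rw [Finset.mul_sum]
        _ ≤ M * (k * ε') := by
            refine mul_le_mul_of_nonneg_left ?_ hM.le
            rw [one_div, inv_mul_le_iff₀ hk0'] at hrel
            exact hrel
        _ = k * ε := by rw [hε]; ring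
    have h4 := (Finset.abs_sum_le_sum_abs (fun i => F (X i ω) - G (X i ω)) Finset.univ).trans hsum
    rw [abs_le] at h4
    simp only [Finset.sum_sub_distrib, Finset.sum_const, Finset.card_univ, Fintype.card_fin,
      nsmul_eq_mul] at e2 e3 h4
    obtain ⟨h5, h6⟩ := h4
    have h7 : 3 * ε' * M = 3 * ε := by rw [hε]; ring
    rw [h7, abs_le]
    constructor
    · refine le_of_mul_le_mul_left ?_ hk0'
      nlinarith [mul_pos hk0' hε0]
    · refine le_of_mul_le_mul_left ?_ hk0'
      nlinarith [mul_pos hk0' hε0]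
  have hfin : (1 : ℝ) ≤ Pr.real S + (δ / 2 + δ / 2) := by
    calc (1 : ℝ) = Pr.real Set.univ := by simp
      _ ≤ Pr.real (S ∪ (A ∪ A')) := measureReal_mono hcov
      _ ≤ Pr.real S + Pr.real (A ∪ A') := measureReal_union_le _ _
      _ ≤ Pr.real S + (Pr.real A + Pr.real A') := by gcongr; exact measureReal_union_le _ _
      _ ≤ _ := by gcongr
  rw [ge_iff_le, ENNReal.ofReal_le_iff_le_toReal (measure_ne_top _ _)]
  change _ ≤ Pr.real S
  linarith
end
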